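/- Let (Ω, 𝔉, ν) be an atomless probability space, let τ > 0, and let S ∈ L¹(ν) satisfy ∫ S dν = 0 and |∫_X S dν| ≤ (2τ)^{-1/2}·I(ν(X)) for every measurable set X ⊆ Ω. Then S is dominated in convex order by a centered Gaussian of variance 1/(2τ): for every convex function ψ : ℝ → ℝ such that ψ ∘ S is ν-integrable and ψ is integrable with respect to the centered Gaussian measure of variance 1/(2τ), one has ∫ ψ(S) dν ≤ ∫_ℝ ψ dγ_{1/(2τ)}. -/

import Mathlib

open Real MeasureTheory ProbabilityTheory

/-- The standard Gaussian density. -/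
noncomputable def gaussPdf (z : ℝ) : ℝ := (Real.sqrt (2 * Real.pi))⁻¹ * Real.exp (-z ^ 2 / 2)

/-- The standard normal CDF. -/
noncomputable def Phi (r : ℝ) : ℝ := ∫ z in Set.Iic r, gaussPdf z

/-- The inverse of the standard normal CDF. -/
noncomputable def PhiInv : ℝ → ℝ := Function.invFun Phi

/-- The Gaussian isoperimetric profile `I = φ ∘ Φ⁻¹`. -/
noncomputable def gaussI (a : ℝ) : ℝ := gaussPdf (PhiInv a)

/-! Among all measurable sets `X`, the integral of `S - t` over `X` is largest for `X = {S > t}`,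
where it equals the stop-loss `E (S - t)⁺`. Put `σ = (2τ)^{-1/2}` and `r = Φ⁻¹(ν X)`. The
hypothesis bounds `∫_X (S - t)` by `σ φ(r) - t Φ(r)`, which is the integral of `-σ z - t` over the
half-line `z ≤ r` against the standard Gaussian `γ₁`, hence at most the stop-loss of `-σ z`, a
variable of law `γ_{σ²}`. So `S` has smaller call values `E (S - t)⁺` than `γ_{σ²}`, and, the
means being equal, also smaller put values `E (t - S)⁺` by put-call parity. A convex function is
affine plus a positive mixture (with respect to its second derivative measure) of calls
`(x - t)⁺`, `t > 0`, and puts `(t - x)⁺`, `t ≤ 0`, and the affine part has equal integrals. -/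

open Set Filter Topology
open scoped NNReal ENNReal

section PositivePart

variable {Ω : Type*} {mΩ : MeasurableSpace Ω} {μ : Measure Ω} {f : Ω → ℝ}

lemma lintegral_ofReal_eq_ofReal_integral_max (hf : Integrable f μ) :
    ∫⁻ x, ENNReal.ofReal (f x) ∂μ = ENNReal.ofReal (∫ x, max (f x) 0 ∂μ) := by
  rw [ofReal_integral_eq_lintegral_ofReal hf.pos_part (ae_of_all _ fun _ ↦ le_max_right _ _)]
  simp only [ENNReal.ofReal_max, ENNReal.ofReal_zero, zero_le, max_eq_left]

lemma ofReal_setIntegral_le_lintegral_ofReal (hf : Integrable f μ) (X : Set Ω) :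
    ENNReal.ofReal (∫ x in X, f x ∂μ) ≤ ∫⁻ x, ENNReal.ofReal (f x) ∂μ :=
  calc
    ENNReal.ofReal (∫ x in X, f x ∂μ) ≤ ENNReal.ofReal (∫ x in X, max (f x) 0 ∂μ) :=
      ENNReal.ofReal_le_ofReal <|
        setIntegral_mono hf.integrableOn hf.pos_part.integrableOn fun _ ↦ le_max_left _ _
    _ = ∫⁻ x in X, ENNReal.ofReal (f x) ∂μ :=
      (lintegral_ofReal_eq_ofReal_integral_max hf.integrableOn).symm
    _ ≤ ∫⁻ x, ENNReal.ofReal (f x) ∂μ := setLIntegral_le_lintegral _ _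

lemma exists_measurableSet_lintegral_ofReal_eq (hf : Integrable f μ) :
    ∃ X, MeasurableSet X ∧ ∫⁻ x, ENNReal.ofReal (f x) ∂μ = ENNReal.ofReal (∫ x in X, f x ∂μ) := by
  obtain ⟨X, -, hX, hXf⟩ : ∃ X ⊇ {x | 0 < f x}, MeasurableSet X ∧ X =ᵐ[μ] {x | 0 < f x} :=
    (nullMeasurableSet_lt aemeasurable_const hf.aemeasurable).exists_measurable_superset_ae_eq
  refine ⟨X, hX, ?_⟩
  rw [lintegral_ofReal_eq_ofReal_integral_max hf, ← integral_indicator hX]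
  congr 1
  refine integral_congr_ae ?_
  filter_upwards [indicator_ae_eq_of_ae_eq_set (f := f) hXf] with x hx
  rw [hx]
  rcases lt_or_ge 0 (f x) with h | h
  · rw [max_eq_left h.le, indicator_of_mem (show x ∈ {x | 0 < f x} from h)]
  · rw [max_eq_right h, indicator_of_notMem (show x ∉ {x | 0 < f x} from h.not_gt)]

variable {Ω' : Type*} {mΩ' : MeasurableSpace Ω'} {ν : Measure Ω'} {g : Ω' → ℝ}

lemma integrable_of_lintegral_ofReal_le (hfm : AEStronglyMeasurable f μ) (hf : 0 ≤ᵐ[μ] f)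
    (hg : Integrable g ν)
    (hle : ∫⁻ x, ENNReal.ofReal (f x) ∂μ ≤ ∫⁻ y, ENNReal.ofReal (g y) ∂ν) : Integrable f μ :=
  ⟨hfm, (hasFiniteIntegral_iff_ofReal hf).2 (hle.trans_lt hg.lintegral_lt_top)⟩

lemma integral_le_integral_of_lintegral_ofReal_le (hf : Integrable f μ) (hf_nonneg : 0 ≤ᵐ[μ] f)
    (hg : Integrable g ν) (hg_nonneg : 0 ≤ᵐ[ν] g)
    (hle : ∫⁻ x, ENNReal.ofReal (f x) ∂μ ≤ ∫⁻ y, ENNReal.ofReal (g y) ∂ν) :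
    ∫ x, f x ∂μ ≤ ∫ y, g y ∂ν := by
  rwa [← ENNReal.ofReal_le_ofReal_iff (integral_nonneg_of_ae hg_nonneg),
    ofReal_integral_eq_lintegral_ofReal hf hf_nonneg,
    ofReal_integral_eq_lintegral_ofReal hg hg_nonneg]

lemma lintegral_ofReal_neg_le_lintegral_ofReal_neg (hf : Integrable f μ) (hg : Integrable g ν)
    (hfg : ∫ x, f x ∂μ = ∫ y, g y ∂ν)
    (hle : ∫⁻ x, ENNReal.ofReal (f x) ∂μ ≤ ∫⁻ y, ENNReal.ofReal (g y) ∂ν) :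
    ∫⁻ x, ENNReal.ofReal (-f x) ∂μ ≤ ∫⁻ y, ENNReal.ofReal (-g y) ∂ν := by
  rw [integral_eq_lintegral_pos_part_sub_lintegral_neg_part hf,
    integral_eq_lintegral_pos_part_sub_lintegral_neg_part hg] at hfg
  refine (ENNReal.toReal_le_toReal hf.neg.lintegral_lt_top.ne hg.neg.lintegral_lt_top.ne).1 ?_
  simp only [Pi.neg_apply]
  linarith [ENNReal.toReal_mono hg.lintegral_lt_top.ne hle]

end PositivePart

section Taylor

lemma lintegral_measure_Ici_eq_lintegral_measure_Iic (μ ν : Measure ℝ) [SFinite μ] [SFinite ν] :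
    ∫⁻ t, ν (Ici t) ∂μ = ∫⁻ s, μ (Iic s) ∂ν := by
  have hm : MeasurableSet {p : ℝ × ℝ | p.1 ≤ p.2} := measurableSet_le measurable_fst measurable_snd
  exact (Measure.prod_apply hm).symm.trans (Measure.prod_apply_symm hm)

lemma lintegral_measure_Iio_eq_lintegral_measure_Ioi (μ ν : Measure ℝ) [SFinite μ] [SFinite ν] :
    ∫⁻ t, ν (Iio t) ∂μ = ∫⁻ s, μ (Ioi s) ∂ν := by
  have hm : MeasurableSet {p : ℝ × ℝ | p.2 < p.1} := measurableSet_lt measurable_snd measurable_fst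
  exact (Measure.prod_apply hm).symm.trans (Measure.prod_apply_symm hm)

lemma setLIntegral_Ioi_ofReal_sub (F : StieltjesFunction ℝ) (a x : ℝ) :
    ∫⁻ t in Ioi a, ENNReal.ofReal (x - t) ∂F.measure =
      ∫⁻ s in Iio x, ENNReal.ofReal (F s - F a) := by
  have h := lintegral_measure_Ici_eq_lintegral_measure_Iic (F.measure.restrict (Ioi a))
    (volume.restrict (Iio x))
  simpa only [Measure.restrict_apply measurableSet_Ici, Measure.restrict_apply measurableSet_Iic,
    Ici_inter_Iio, inter_comm (Iic _), Ioi_inter_Iic, Real.volume_Ico, F.measure_Ioc] using h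

lemma setLIntegral_Iic_ofReal_sub (F : StieltjesFunction ℝ) (a x : ℝ) :
    ∫⁻ t in Iic a, ENNReal.ofReal (t - x) ∂F.measure =
      ∫⁻ s in Ici x, ENNReal.ofReal (F a - F s) := by
  have h := lintegral_measure_Iio_eq_lintegral_measure_Ioi (F.measure.restrict (Iic a))
    (volume.restrict (Ici x))
  simpa only [Measure.restrict_apply measurableSet_Iio, Measure.restrict_apply measurableSet_Ioi,
    inter_comm (Iio _), Ici_inter_Iio, Ioi_inter_Iic, Real.volume_Ico, F.measure_Ioc] using h

lemma setLIntegral_ofReal_eq_zero {g : ℝ → ℝ} {s : Set ℝ} (hs : MeasurableSet s)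
    (hg : ∀ x ∈ s, g x ≤ 0) : ∫⁻ x in s, ENNReal.ofReal (g x) = 0 := by
  rw [setLIntegral_congr_fun hs fun x hx ↦ ENNReal.ofReal_of_nonpos (hg x hx), lintegral_zero]

variable {f : ℝ → ℝ}

lemma intervalIntegral_sub_nonneg_of_monotone (hf : Monotone f) (a x : ℝ) :
    0 ≤ ∫ s in a..x, (f s - f a) := by
  rcases le_total a x with hax | hxa
  · exact intervalIntegral.integral_nonneg hax fun s hs ↦ sub_nonneg.2 (hf hs.1)
  · rw [intervalIntegral.integral_symm, ← intervalIntegral.integral_neg]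
    exact intervalIntegral.integral_nonneg hxa fun s hs ↦ by linarith [hf hs.2]

lemma ofReal_intervalIntegral_sub_of_monotone (hf : Monotone f) (a x : ℝ) :
    ENNReal.ofReal (∫ s in a..x, (f s - f a)) =
      (∫⁻ s in Iio x, ENNReal.ofReal (f s - f a)) + ∫⁻ s in Ici x, ENNReal.ofReal (f a - f s) := by
  have hint : ∀ b c, IntervalIntegrable (fun s ↦ f s - f a) volume b c := fun b c ↦
    hf.intervalIntegrable.sub intervalIntegrable_const
  rcases le_total a x with hax | hxa
  · have hIoc : ∀ᵐ s ∂volume.restrict (Ioc a x), 0 ≤ f s - f a :=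
      ae_restrict_of_forall_mem measurableSet_Ioc fun s hs ↦ sub_nonneg.2 (hf hs.1.le)
    rw [setLIntegral_ofReal_eq_zero measurableSet_Ici fun s hs ↦ sub_nonpos.2 (hf (hax.trans hs)),
      add_zero, ← Iio_union_Ico_eq_Iio hax,
      lintegral_union measurableSet_Ico ((Iio_disjoint_Ici le_rfl).mono_right Ico_subset_Ici_self),
      setLIntegral_ofReal_eq_zero measurableSet_Iio fun s hs ↦ sub_nonpos.2 (hf (le_of_lt hs)),
      zero_add, restrict_Ico_eq_restrict_Ioc, intervalIntegral.integral_of_le hax,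
      ofReal_integral_eq_lintegral_ofReal (hint a x).1 hIoc]
  · have hIoc : ∀ᵐ s ∂volume.restrict (Ioc x a), 0 ≤ f a - f s :=
      ae_restrict_of_forall_mem measurableSet_Ioc fun s hs ↦ sub_nonneg.2 (hf hs.2)
    rw [setLIntegral_ofReal_eq_zero measurableSet_Iio
        fun s hs ↦ sub_nonpos.2 (hf ((le_of_lt hs).trans hxa)),
      zero_add, ← Ico_union_Ici_eq_Ici hxa,
      lintegral_union measurableSet_Ici ((Iio_disjoint_Ici le_rfl).mono_left Ico_subset_Iio_self),
      setLIntegral_ofReal_eq_zero measurableSet_Ici fun s hs ↦ sub_nonpos.2 (hf hs),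
      add_zero, restrict_Ico_eq_restrict_Ioc, intervalIntegral.integral_symm,
      ← intervalIntegral.integral_neg, intervalIntegral.integral_of_le hxa]
    simp only [neg_sub]
    exact ofReal_integral_eq_lintegral_ofReal ((integrable_neg_iff.2 (hint x a).1).congr
      (ae_of_all _ fun _ ↦ neg_sub _ _)) hIoc

lemma exists_stieltjesFunction_intervalIntegral_eq_sub {ψ : ℝ → ℝ} (hψ : ConvexOn ℝ univ ψ) :
    ∃ F : StieltjesFunction ℝ, ∀ a b, ∫ s in a..b, F s = ψ b - ψ a := by
  have hmono : Monotone fun x ↦ derivWithin ψ (Ioi x) x := by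
    simpa only [interior_univ, monotoneOn_univ] using hψ.monotoneOn_rightDeriv
  have hcont : ContinuousOn ψ univ := hψ.continuousOn isOpen_univ
  have hae : hmono.stieltjesFunction =ᵐ[volume] fun x ↦ derivWithin ψ (Ioi x) x := by
    filter_upwards [hmono.countable_not_continuousAt.ae_notMem volume] with x hx
    rw [hmono.stieltjesFunction_eq]
    exact (not_not.1 hx).continuousWithinAt.rightLim_eq
  refine ⟨hmono.stieltjesFunction, fun a b ↦ ?_⟩
  rw [intervalIntegral.integral_congr_ae (hae.mono fun x hx _ ↦ hx)]
  exact intervalIntegral.integral_eq_sub_of_hasDeriv_right (hcont.mono (subset_univ _))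
    (fun x _ ↦ hψ.hasDerivWithinAt_rightDeriv_of_mem_interior (by simp)) hmono.intervalIntegrable

section Remainder

/-- The first-order Taylor remainder at `a` of a function `ψ` whose slope at `a` is `f a`; for a
convex `ψ`, the function `f` is a one-sided derivative. -/
def taylorRemainder (ψ f : ℝ → ℝ) (a x : ℝ) : ℝ := ψ x - ψ a - f a * (x - a)

variable {ψ : ℝ → ℝ} {F : StieltjesFunction ℝ}

lemma taylorRemainder_eq_intervalIntegral (hF : ∀ a b, ∫ s in a..b, F s = ψ b - ψ a) (a x : ℝ) :
    taylorRemainder ψ F a x = ∫ s in a..x, (F s - F a) := by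
  rw [intervalIntegral.integral_sub F.mono.intervalIntegrable intervalIntegrable_const, hF,
    intervalIntegral.integral_const, smul_eq_mul, mul_comm, taylorRemainder]

lemma taylorRemainder_nonneg (hF : ∀ a b, ∫ s in a..b, F s = ψ b - ψ a) (a x : ℝ) :
    0 ≤ taylorRemainder ψ F a x :=
  (intervalIntegral_sub_nonneg_of_monotone F.mono a x).trans_eq
    (taylorRemainder_eq_intervalIntegral hF a x).symm

lemma lintegral_ofReal_taylorRemainder (hF : ∀ a b, ∫ s in a..b, F s = ψ b - ψ a) (a : ℝ)
    (ρ : Measure ℝ) [SFinite ρ] :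
    ∫⁻ x, ENNReal.ofReal (taylorRemainder ψ F a x) ∂ρ =
      (∫⁻ t in Ioi a, ∫⁻ x, ENNReal.ofReal (x - t) ∂ρ ∂F.measure) +
        ∫⁻ t in Iic a, ∫⁻ x, ENNReal.ofReal (t - x) ∂ρ ∂F.measure := by
  have hcall : ∫⁻ t in Ioi a, ∫⁻ x, ENNReal.ofReal (x - t) ∂ρ ∂F.measure =
      ∫⁻ x, ∫⁻ t in Ioi a, ENNReal.ofReal (x - t) ∂F.measure ∂ρ :=
    lintegral_lintegral_swap (by fun_prop)
  have hput : ∫⁻ t in Iic a, ∫⁻ x, ENNReal.ofReal (t - x) ∂ρ ∂F.measure =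
      ∫⁻ x, ∫⁻ t in Iic a, ENNReal.ofReal (t - x) ∂F.measure ∂ρ :=
    lintegral_lintegral_swap (by fun_prop)
  have hmeas : Measurable fun x ↦ ∫⁻ t in Ioi a, ENNReal.ofReal (x - t) ∂F.measure :=
    Measurable.lintegral_prod_right' (f := fun p : ℝ × ℝ ↦ ENNReal.ofReal (p.1 - p.2))
      (by fun_prop)
  rw [hcall, hput, ← lintegral_add_left hmeas]
  refine lintegral_congr fun x ↦ ?_
  rw [taylorRemainder_eq_intervalIntegral hF, ofReal_intervalIntegral_sub_of_monotone F.mono,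
    setLIntegral_Ioi_ofReal_sub, setLIntegral_Iic_ofReal_sub]

end Remainder

end Taylor

section ConvexOrder

lemma integral_add_mul_id {ρ : Measure ℝ} [IsFiniteMeasure ρ] (hρ : Integrable (fun x ↦ x) ρ)
    (b c : ℝ) : ∫ x, (b + c * x) ∂ρ = ρ.real univ * b + c * ∫ x, x ∂ρ := by
  rw [integral_add (integrable_const b) (hρ.const_mul c), integral_const, smul_eq_mul,
    integral_const_mul]

variable {P Q : Measure ℝ} [IsFiniteMeasure P] [IsFiniteMeasure Q]

lemma lintegral_ofReal_taylorRemainder_mono (hP : Integrable (fun x ↦ x) P)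
    (hQ : Integrable (fun x ↦ x) Q) (hmass : P.real univ = Q.real univ)
    (hmean : ∫ x, x ∂P = ∫ x, x ∂Q)
    (hcall : ∀ t, ∫⁻ x, ENNReal.ofReal (x - t) ∂P ≤ ∫⁻ x, ENNReal.ofReal (x - t) ∂Q)
    {ψ : ℝ → ℝ} {F : StieltjesFunction ℝ} (hF : ∀ a b, ∫ s in a..b, F s = ψ b - ψ a) (a : ℝ) :
    ∫⁻ x, ENNReal.ofReal (taylorRemainder ψ F a x) ∂P ≤
      ∫⁻ x, ENNReal.ofReal (taylorRemainder ψ F a x) ∂Q := by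
  have hput (t : ℝ) :
      ∫⁻ x, ENNReal.ofReal (t - x) ∂P ≤ ∫⁻ x, ENNReal.ofReal (t - x) ∂Q := by
    have hint : ∫ x, (x - t) ∂P = ∫ x, (x - t) ∂Q := by
      rw [integral_sub hP (integrable_const t), integral_sub hQ (integrable_const t),
        integral_const, integral_const, hmass, hmean]
    simpa only [Pi.sub_apply, neg_sub] using lintegral_ofReal_neg_le_lintegral_ofReal_neg
      (hP.sub (integrable_const t)) (hQ.sub (integrable_const t)) hint (hcall t)
  rw [lintegral_ofReal_taylorRemainder hF, lintegral_ofReal_taylorRemainder hF]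
  exact add_le_add (lintegral_mono fun t ↦ hcall t) (lintegral_mono fun t ↦ hput t)

theorem integrable_and_integral_le_of_forall_lintegral_ofReal_sub_le
    (hP : Integrable (fun x ↦ x) P) (hQ : Integrable (fun x ↦ x) Q)
    (hmass : P.real univ = Q.real univ) (hmean : ∫ x, x ∂P = ∫ x, x ∂Q)
    (hcall : ∀ t, ∫⁻ x, ENNReal.ofReal (x - t) ∂P ≤ ∫⁻ x, ENNReal.ofReal (x - t) ∂Q)
    {ψ : ℝ → ℝ} (hψ : ConvexOn ℝ univ ψ) (hψQ : Integrable ψ Q) :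
    Integrable ψ P ∧ ∫ x, ψ x ∂P ≤ ∫ x, ψ x ∂Q := by
  obtain ⟨F, hF⟩ := exists_stieltjesFunction_intervalIntegral_eq_sub hψ
  set R : ℝ → ℝ := taylorRemainder ψ F 0 with hR
  set A : ℝ → ℝ := fun x ↦ ψ 0 + F 0 * x with hA
  have hψ_eq : ψ = R + A := by
    ext x
    simp only [hR, hA, Pi.add_apply, taylorRemainder]
    ring
  have hR_nonneg (μ : Measure ℝ) : 0 ≤ᵐ[μ] R := ae_of_all _ (taylorRemainder_nonneg hF 0)
  have hR_le : ∫⁻ x, ENNReal.ofReal (R x) ∂P ≤ ∫⁻ x, ENNReal.ofReal (R x) ∂Q :=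
    lintegral_ofReal_taylorRemainder_mono hP hQ hmass hmean hcall hF 0
  have hAP : Integrable A P := (integrable_const _).add (hP.const_mul _)
  have hAQ : Integrable A Q := (integrable_const _).add (hQ.const_mul _)
  have hA_eq : ∫ x, A x ∂P = ∫ x, A x ∂Q := by
    rw [integral_add_mul_id hP, integral_add_mul_id hQ, hmass, hmean]
  have hR_sub : R = ψ - A := eq_sub_of_add_eq hψ_eq.symm
  have hψ_cont : Continuous ψ := continuousOn_univ.1 (hψ.continuousOn isOpen_univ)
  have hR_cont : Continuous R := hR_sub ▸ hψ_cont.sub (by fun_prop)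
  have hRQ : Integrable R Q := hR_sub ▸ hψQ.sub hAQ
  have hRP : Integrable R P :=
    integrable_of_lintegral_ofReal_le hR_cont.aestronglyMeasurable (hR_nonneg P) hRQ hR_le
  rw [hψ_eq, integral_add' hRP hAP, integral_add' hRQ hAQ, hA_eq]
  exact ⟨hRP.add hAP, add_le_add_left (integral_le_integral_of_lintegral_ofReal_le hRP
    (hR_nonneg P) hRQ (hR_nonneg Q) hR_le) _⟩

end ConvexOrder

section Gaussian

lemma gaussianPDFReal_zero_one : gaussianPDFReal 0 1 = gaussPdf := by
  ext z
  simp [gaussianPDFReal, gaussPdf]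

lemma integrable_gaussPdf : Integrable gaussPdf :=
  gaussianPDFReal_zero_one ▸ integrable_gaussianPDFReal 0 1

lemma integrable_id_gaussianReal (m : ℝ) (v : ℝ≥0) : Integrable (fun z ↦ z) (gaussianReal m v) :=
  memLp_one_iff_integrable.1 (memLp_id_gaussianReal 1)

lemma gaussianReal_real_Iic (r : ℝ) : (gaussianReal 0 1).real (Iic r) = Phi r := by
  rw [measureReal_def, gaussianReal_apply_eq_integral _ one_ne_zero, gaussianPDFReal_zero_one,
    ENNReal.toReal_ofReal, Phi]
  exact setIntegral_nonneg measurableSet_Iic fun z _ ↦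
    gaussianPDFReal_zero_one ▸ gaussianPDFReal_nonneg 0 1 z

lemma Phi_eq_cdf : Phi = cdf (gaussianReal 0 1) := by
  ext r
  rw [cdf_eq_real, gaussianReal_real_Iic]

lemma continuous_Phi : Continuous Phi :=
  continuous_iff_continuousAt.2 fun r ↦
    integrable_gaussPdf.integrableOn.continuousOn_Iic_primitive_Iic.continuousAt
      (Iic_mem_nhds (lt_add_one r))

lemma Phi_PhiInv {a : ℝ} (ha : a ∈ Ioo 0 1) : Phi (PhiInv a) = a := by
  have hbot : Tendsto Phi atBot (𝓝 0) := Phi_eq_cdf ▸ tendsto_cdf_atBot _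
  have htop : Tendsto Phi atTop (𝓝 1) := Phi_eq_cdf ▸ tendsto_cdf_atTop _
  exact Function.invFun_eq <| mem_range_of_exists_le_of_exists_ge continuous_Phi
    (hbot.eventually_le_const ha.1).exists (htop.eventually_const_le ha.2).exists

lemma hasDerivAt_gaussPdf (z : ℝ) : HasDerivAt gaussPdf (-(gaussPdf z * z)) z := by
  have hexp : HasDerivAt (fun z : ℝ ↦ -z ^ 2 / 2) (-z) z := by
    refine ((hasDerivAt_pow 2 z).neg.div_const 2).congr_deriv ?_
    rw [Nat.cast_ofNat, pow_one]
    ring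
  refine (hexp.exp.const_mul (√(2 * π))⁻¹).congr_deriv ?_
  rw [gaussPdf, mul_assoc, mul_neg, mul_neg]

lemma integrable_gaussPdf_mul_id : Integrable fun z ↦ gaussPdf z * z := by
  have h := integrable_id_gaussianReal 0 1
  rw [gaussianReal_of_var_ne_zero _ one_ne_zero, integrable_withDensity_iff_integrable_smul'
    (measurable_gaussianPDF 0 1) (ae_of_all _ fun _ ↦ gaussianPDF_lt_top)] at h
  simpa only [toReal_gaussianPDF, gaussianPDFReal_zero_one, smul_eq_mul] using h

lemma setIntegral_Iic_id_gaussianReal (r : ℝ) :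
    ∫ z in Iic r, z ∂(gaussianReal 0 1) = -gaussPdf r := by
  have htendsto : Tendsto gaussPdf atBot (𝓝 0) :=
    tendsto_zero_of_hasDerivAt_of_integrableOn_Iic (a := r) (fun z _ ↦ hasDerivAt_gaussPdf z)
      integrable_gaussPdf_mul_id.neg.integrableOn integrable_gaussPdf.integrableOn
  have hIic : ∫ z in Iic r, -(gaussPdf z * z) = gaussPdf r - 0 :=
    integral_Iic_of_hasDerivAt_of_tendsto' (fun z _ ↦ hasDerivAt_gaussPdf z)
      integrable_gaussPdf_mul_id.neg.integrableOn htendsto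
  rw [gaussianReal_of_var_ne_zero _ one_ne_zero, setIntegral_withDensity_eq_setIntegral_toReal_smul
    (measurable_gaussianPDF 0 1) (ae_of_all _ fun _ ↦ gaussianPDF_lt_top) _ measurableSet_Iic]
  simp only [toReal_gaussianPDF, gaussianPDFReal_zero_one, smul_eq_mul]
  rw [← sub_zero (gaussPdf r), ← hIic, integral_neg, neg_neg]

lemma setIntegral_Iic_neg_mul_sub_gaussianReal (σ t r : ℝ) :
    ∫ z in Iic r, (-σ * z - t) ∂(gaussianReal 0 1) = σ * gaussPdf r - t * Phi r := by
  rw [integral_sub ((integrable_id_gaussianReal 0 1).const_mul (-σ)).integrableOn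
    (integrable_const t), integral_const_mul, setIntegral_Iic_id_gaussianReal, setIntegral_const,
    gaussianReal_real_Iic, smul_eq_mul]
  ring

lemma ofReal_mul_gaussPdf_sub_le_lintegral_gaussianReal (σ : ℝ≥0) (t r : ℝ) :
    ENNReal.ofReal (σ * gaussPdf r - t * Phi r) ≤
      ∫⁻ z, ENNReal.ofReal (z - t) ∂(gaussianReal 0 (σ ^ 2)) := by
  have hmap : gaussianReal 0 (σ ^ 2) = (gaussianReal 0 1).map (fun z ↦ -(σ : ℝ) * z) := by
    rw [gaussianReal_map_const_mul, mul_zero, mul_one]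
    congr 1
    ext
    simp
  rw [hmap, lintegral_map (by fun_prop) (by fun_prop),
    ← setIntegral_Iic_neg_mul_sub_gaussianReal]
  exact ofReal_setIntegral_le_lintegral_ofReal
    (((integrable_id_gaussianReal 0 1).const_mul _).sub (integrable_const t)) _

end Gaussian

section Domination

variable {Ω : Type*} {mΩ : MeasurableSpace Ω} {ν : Measure Ω} [IsProbabilityMeasure ν] {σ : ℝ≥0}
  {S : Ω → ℝ}

lemma ofReal_setIntegral_sub_le_lintegral_gaussianReal (hS : Integrable S ν)
    (hmean : ∫ x, S x ∂ν = 0) {X : Set Ω} (hX : MeasurableSet X)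
    (hSX : ∫ x in X, S x ∂ν ≤ σ * gaussI (ν.real X)) (t : ℝ) :
    ENNReal.ofReal (∫ x in X, (S x - t) ∂ν) ≤
      ∫⁻ z, ENNReal.ofReal (z - t) ∂(gaussianReal 0 (σ ^ 2)) := by
  have hid : Integrable (fun z ↦ z - t) (gaussianReal 0 (σ ^ 2)) :=
    (integrable_id_gaussianReal 0 (σ ^ 2)).sub (integrable_const t)
  -- `PhiInv 0` and `PhiInv 1` are junk values of `Function.invFun`.
  rcases eq_or_ne (ν X) 0 with h0 | h0
  · simp [Measure.restrict_eq_zero.2 h0]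
  rcases eq_or_ne (ν X) 1 with h1 | h1
  · have hXuniv : ∫ x in X, (S x - t) ∂ν = ∫ z in univ, (z - t) ∂(gaussianReal 0 (σ ^ 2)) := by
      rw [Measure.restrict_eq_self_of_ae_mem ((prob_compl_eq_zero_iff hX).2 h1),
        setIntegral_univ, integral_sub hS (integrable_const t),
        integral_sub (integrable_id_gaussianReal 0 (σ ^ 2)) (integrable_const t), hmean,
        integral_id_gaussianReal]
      simp
    exact hXuniv ▸ ofReal_setIntegral_le_lintegral_ofReal hid univ
  · have hXmem : ν.real X ∈ Ioo 0 1 :=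
      ⟨ENNReal.toReal_pos h0 (measure_ne_top _ _),
        measureReal_le_one.lt_of_ne fun h ↦ h1 <| by
          rw [← ofReal_measureReal, h, ENNReal.ofReal_one]⟩
    refine le_trans (ENNReal.ofReal_le_ofReal ?_)
      (ofReal_mul_gaussPdf_sub_le_lintegral_gaussianReal σ t (PhiInv (ν.real X)))
    rw [integral_sub hS.integrableOn (integrable_const t), setIntegral_const, smul_eq_mul,
      Phi_PhiInv hXmem, mul_comm t]
    exact sub_le_sub_right hSX _

lemma lintegral_ofReal_sub_le_lintegral_gaussianReal (hS : Integrable S ν)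
    (hmean : ∫ x, S x ∂ν = 0)
    (hset : ∀ X, MeasurableSet X → ∫ x in X, S x ∂ν ≤ σ * gaussI (ν.real X)) (t : ℝ) :
    ∫⁻ x, ENNReal.ofReal (S x - t) ∂ν ≤
      ∫⁻ z, ENNReal.ofReal (z - t) ∂(gaussianReal 0 (σ ^ 2)) := by
  obtain ⟨X, hX, hX_eq⟩ := exists_measurableSet_lintegral_ofReal_eq (hS.sub (integrable_const t))
  exact hX_eq.trans_le (ofReal_setIntegral_sub_le_lintegral_gaussianReal hS hmean hX (hset X hX) t)

end Domination

theorem stmt16_general {Ω : Type*} [MeasurableSpace Ω] {ν : Measure Ω} [IsProbabilityMeasure ν]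
    {σ : ℝ≥0} {S : Ω → ℝ} (hS : Integrable S ν) (hmean : ∫ x, S x ∂ν = 0)
    (hset : ∀ X, MeasurableSet X → ∫ x in X, S x ∂ν ≤ σ * gaussI (ν.real X))
    {ψ : ℝ → ℝ} (hψ : ConvexOn ℝ univ ψ) (hint : Integrable ψ (gaussianReal 0 (σ ^ 2))) :
    Integrable (fun x ↦ ψ (S x)) ν ∧ ∫ x, ψ (S x) ∂ν ≤ ∫ z, ψ z ∂(gaussianReal 0 (σ ^ 2)) := by
  have hSm : AEMeasurable S ν := hS.aemeasurable
  have hψm : AEStronglyMeasurable ψ (ν.map S) :=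
    (continuousOn_univ.1 (hψ.continuousOn isOpen_univ)).aestronglyMeasurable
  have : IsProbabilityMeasure (ν.map S) := Measure.isProbabilityMeasure_map hSm
  have hcall (t : ℝ) : ∫⁻ x, ENNReal.ofReal (x - t) ∂(ν.map S) ≤
      ∫⁻ z, ENNReal.ofReal (z - t) ∂(gaussianReal 0 (σ ^ 2)) := by
    rw [lintegral_map' (by fun_prop) hSm]
    exact lintegral_ofReal_sub_le_lintegral_gaussianReal hS hmean hset t
  have hmap := integrable_and_integral_le_of_forall_lintegral_ofReal_sub_le
    ((integrable_map_measure (by fun_prop) hSm).2 hS) (integrable_id_gaussianReal 0 (σ ^ 2))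
    (by simp only [probReal_univ])
    (by rw [integral_map hSm (by fun_prop), hmean, integral_id_gaussianReal]) hcall hψ hint
  rwa [integrable_map_measure hψm hSm, integral_map hSm hψm] at hmap

/-- Convex-order domination: on an atomless probability space, if `S ∈ L¹(ν)` has mean
zero and `|∫_X S dν| ≤ (2τ)^{-1/2} I(ν(X))` for every measurable `X`, then
`∫ ψ(S) dν ≤ ∫ ψ dγ_{1/(2τ)}` for every convex `ψ` for which both sides make sense. -/
theorem stmt16 {Ω : Type*} [MeasurableSpace Ω] (ν : Measure Ω) [IsProbabilityMeasure ν]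
    (hatomless : ∀ s : Set Ω, MeasurableSet s → 0 < ν s →
      ∃ t, t ⊆ s ∧ MeasurableSet t ∧ 0 < ν t ∧ ν t < ν s)
    (τ : ℝ) (hτ : 0 < τ) (S : Ω → ℝ) (hS : Integrable S ν)
    (hmean : ∫ x, S x ∂ν = 0)
    (hset : ∀ X : Set Ω, MeasurableSet X →
      |∫ x in X, S x ∂ν| ≤ (Real.sqrt (2 * τ))⁻¹ * gaussI (ν X).toReal)
    (ψ : ℝ → ℝ) (hψ : ConvexOn ℝ Set.univ ψ)
    (hint1 : Integrable (fun x => ψ (S x)) ν)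
    (hint2 : Integrable ψ (gaussianReal 0 ((1 / (2 * τ)).toNNReal))) :
    ∫ x, ψ (S x) ∂ν ≤ ∫ z, ψ z ∂(gaussianReal 0 ((1 / (2 * τ)).toNNReal)) := by
  have hvar : (1 / (2 * τ)).toNNReal = (√(2 * τ))⁻¹.toNNReal ^ 2 := by
    rw [← Real.toNNReal_pow (by positivity), inv_pow, Real.sq_sqrt (by positivity), one_div]
  rw [hvar] at hint2 ⊢
  refine (stmt16_general hS hmean (fun X hX ↦ ?_) hψ hint2).2
  rw [Real.coe_toNNReal _ (by positivity)]
  exact (le_abs_self _).trans (hset X hX)
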